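/- Let h be a permutation of a finite set X of size d with cycle type μ (including fixed points), and let i be a positive integer. Then the number of transpositions τ of X such that the cycle type of τ∘h equals μ with two parts equal to i removed and one part equal to 2i added is exactly i²·m_i(μ)·(m_i(μ) − 1)/2. -/

import Mathlib

open Finset Equiv

/-- The cycle type of a permutation including fixed points: the multiset of the sizes of
all cycles (orbits), where each fixed point contributes a part equal to `1`. -/
def cycleTypeFull {X : Type*} [Fintype X] [DecidableEq X] (h : Equiv.Perm X) : Multiset ℕ :=
  h.cycleType + Multiset.replicate (Finset.univ.filter fun x => h x = x).card 1

namespace JoinCount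

variable {X : Type*} [Fintype X] [DecidableEq X]

open Classical in
/-- The cycle of `x` as a finset. -/
noncomputable def cyc (h : Equiv.Perm X) (x : X) : Finset X :=
  Finset.univ.filter fun y => h.SameCycle x y

theorem mem_cyc {h : Equiv.Perm X} {x y : X} : y ∈ cyc h x ↔ h.SameCycle x y := by
  simp [cyc]

/-- The points whose cycle has size `j`. -/
noncomputable def pts (h : Equiv.Perm X) (j : ℕ) : Finset X :=
  Finset.univ.filter fun x => (cyc h x).card = j

theorem mem_pts {h : Equiv.Perm X} {x : X} {j : ℕ} : x ∈ pts h j ↔ (cyc h x).card = j := by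
  simp [pts]

theorem cyc_eq {h : Equiv.Perm X} {x y : X} (hxy : h.SameCycle x y) : cyc h x = cyc h y := by
  ext z
  rw [mem_cyc, mem_cyc]
  exact ⟨fun H => hxy.symm.trans H, fun H => hxy.trans H⟩

theorem cyc_card_pos (h : Equiv.Perm X) (x : X) : 0 < (cyc h x).card :=
  Finset.card_pos.2 ⟨x, mem_cyc.2 (Equiv.Perm.SameCycle.refl _ _)⟩

theorem cyc_of_ne {h : Equiv.Perm X} {x : X} (hx : h x ≠ x) :
    cyc h x = (h.cycleOf x).support := by
  ext y
  rw [mem_cyc, Equiv.Perm.mem_support_cycleOf_iff' hx]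

theorem cyc_of_eq {h : Equiv.Perm X} {x : X} (hx : h x = x) : cyc h x = {x} := by
  ext y
  rw [mem_cyc, Finset.mem_singleton]
  constructor
  · intro H; exact (H.eq_of_left hx).symm
  · rintro rfl; exact Equiv.Perm.SameCycle.refl _ _

theorem cyc_card_eq_one {h : Equiv.Perm X} {x : X} : (cyc h x).card = 1 ↔ h x = x := by
  constructor
  · intro H
    by_contra hx
    rw [cyc_of_ne hx] at H
    have := (h.isCycle_cycleOf hx).two_le_card_support
    omega
  · intro hx; rw [cyc_of_eq hx]; simp

theorem ctf_eq_parts (h : Equiv.Perm X) : cycleTypeFull h = h.partition.parts := by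
  rw [Equiv.Perm.parts_partition, cycleTypeFull]
  congr 2
  have : (Finset.univ.filter fun x => h x = x) = h.supportᶜ := by
    ext x; simp
  rw [this, Finset.card_compl]

theorem ctf_sum (h : Equiv.Perm X) : (cycleTypeFull h).sum = Fintype.card X := by
  rw [ctf_eq_parts]; exact h.partition.parts_sum

theorem zero_notMem_ctf (h : Equiv.Perm X) : 0 ∉ cycleTypeFull h := by
  rw [ctf_eq_parts]; intro H; exact absurd (h.partition.parts_pos H) (by simp)

theorem count_cycleType (h : Equiv.Perm X) (j : ℕ) :
    h.cycleType.count j = (h.cycleFactorsFinset.filter fun c => c.support.card = j).card := by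
  rw [Equiv.Perm.cycleType_def, Multiset.count_map, Finset.card, Finset.filter_val]
  congr 1
  apply Multiset.filter_congr
  intro c _
  simp [eq_comm]

theorem card_pts (h : Equiv.Perm X) (j : ℕ) :
    (pts h j).card = j * (cycleTypeFull h).count j := by
  rcases Nat.lt_or_ge j 2 with hj | hj
  · interval_cases j
    · rw [zero_mul, Finset.card_eq_zero, Finset.eq_empty_iff_forall_notMem]
      intro x hx
      have := cyc_card_pos h x
      rw [mem_pts] at hx
      omega
    · have h1 : h.cycleType.count 1 = 0 := by
        rw [Multiset.count_eq_zero]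
        intro H
        exact absurd (Equiv.Perm.two_le_of_mem_cycleType H) (by simp)
      rw [cycleTypeFull, Multiset.count_add, h1, Multiset.count_replicate_self, one_mul, zero_add]
      congr 1
      ext x
      rw [mem_pts, cyc_card_eq_one]; simp
  · have h1 : (cycleTypeFull h).count j = h.cycleType.count j := by
      rw [cycleTypeFull, Multiset.count_add, Multiset.count_replicate, if_neg (by omega), add_zero]
    rw [h1, count_cycleType]
    have h2 : pts h j
        = (h.cycleFactorsFinset.filter fun c => c.support.card = j).biUnion
            fun c => c.support := by
      ext x
      rw [mem_pts]
      simp only [Finset.mem_biUnion, Finset.mem_filter]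
      constructor
      · intro H
        have hx : h x ≠ x := by
          intro hx
          rw [cyc_card_eq_one.2 hx] at H
          omega
        refine ⟨h.cycleOf x, ⟨?_, ?_⟩, ?_⟩
        · rw [Equiv.Perm.cycleOf_mem_cycleFactorsFinset_iff]; simpa using hx
        · rw [← cyc_of_ne hx]; exact H
        · rw [← cyc_of_ne hx]; exact mem_cyc.2 (Equiv.Perm.SameCycle.refl _ _)
      · rintro ⟨c, ⟨hc, hcj⟩, hxc⟩
        have hx : h x ≠ x := by
          have := Equiv.Perm.mem_cycleFactorsFinset_support_le hc hxc
          simpa using this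
        rw [cyc_of_ne hx, ← Equiv.Perm.cycle_is_cycleOf hxc hc]
        exact hcj
    rw [h2, Finset.card_biUnion]
    · rw [Finset.sum_congr rfl (g := fun _ => j)]
      · simp [mul_comm]
      · intro c hc; exact (Finset.mem_filter.1 hc).2
    · intro c hc d hd hcd
      exact (h.cycleFactorsFinset_pairwise_disjoint (Finset.mem_filter.1 hc).1
        (Finset.mem_filter.1 hd).1 hcd).disjoint_support

theorem not_sameCycle_of_period {f : Equiv.Perm X} {s t : X} {k : ℕ} (hk : 0 < k)
    (hs : (f ^ k) s = s) (ht : ∀ j < k, (f ^ j) s ≠ t) : ¬ f.SameCycle s t := by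
  intro H
  obtain ⟨n, hn⟩ := H.exists_nat_pow_eq
  apply ht (n % k) (Nat.mod_lt _ hk)
  rw [← hn]
  conv_rhs => rw [← Nat.mod_add_div n k, pow_add, pow_mul]
  rw [Equiv.Perm.mul_apply]
  congr 1
  exact (Equiv.Perm.pow_apply_eq_self_of_apply_eq_self hs _).symm

/-- Exactly one of `h`, `swap s t * h` has `s` and `t` in the same cycle. -/
theorem sameCycle_swap (h : Equiv.Perm X) {s t : X} (hst : s ≠ t) :
    (swap s t * h).SameCycle s t ↔ ¬ h.SameCycle s t := by
  classical
  have hex : ∃ k, 0 < k ∧ ((h ^ k) s = s ∨ (h ^ k) s = t) :=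
    ⟨orderOf h, orderOf_pos h, Or.inl (by rw [pow_orderOf_eq_one]; rfl)⟩
  obtain ⟨hk0, hk⟩ := Nat.find_spec hex
  have hmin : ∀ j, 0 < j → j < Nat.find hex → (h ^ j) s ≠ s ∧ (h ^ j) s ≠ t := by
    intro j hj0 hj
    have := Nat.find_min hex hj
    push Not at this
    exact this hj0
  set k := Nat.find hex
  have hg : ∀ j < k, ((swap s t * h) ^ j) s = (h ^ j) s := by
    intro j
    induction j with
    | zero => simp
    | succ j ih =>
      intro hj
      have := hmin (j+1) (by omega) hj
      rw [pow_succ', Equiv.Perm.mul_apply, ih (by omega), Equiv.Perm.mul_apply,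
        ← Equiv.Perm.mul_apply h, ← pow_succ', swap_apply_of_ne_of_ne this.1 this.2]
  have hgk : ((swap s t * h) ^ k) s = swap s t ((h ^ k) s) := by
    obtain ⟨m, hm⟩ : ∃ m, k = m + 1 := ⟨k - 1, by omega⟩
    rw [hm, pow_succ', Equiv.Perm.mul_apply, hg m (by omega), Equiv.Perm.mul_apply,
        ← Equiv.Perm.mul_apply h, ← pow_succ']
  have hnt : ∀ j < k, (h ^ j) s ≠ t := by
    intro j hj
    rcases Nat.eq_zero_or_pos j with rfl | h0
    · simpa using hst
    · exact (hmin j h0 hj).2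
  rcases hk with hk | hk
  · have h1 := not_sameCycle_of_period hk0 hk hnt
    rw [hk, swap_apply_left] at hgk
    exact ⟨fun _ => h1, fun _ => ⟨k, by simpa using hgk⟩⟩
  · rw [hk, swap_apply_right] at hgk
    have h1 := not_sameCycle_of_period hk0 hgk (fun j hj => by rw [hg j hj]; exact hnt j hj)
    exact ⟨fun H => absurd H h1, fun H => absurd ⟨k, by simpa using hk⟩ H⟩

/-- Minimality of `SameCycle`. -/
theorem sameCycle_induct {f : Equiv.Perm X} {R : X → X → Prop} (hr : ∀ x, R x x)
    (hs : ∀ x y, R x y → R x (f y)) {x y : X} (H : f.SameCycle x y) : R x y := by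
  obtain ⟨n, rfl⟩ := H.exists_nat_pow_eq
  clear H
  induction n with
  | zero => exact hr x
  | succ n ih => rw [pow_succ', Equiv.Perm.mul_apply]; exact hs _ _ ih

theorem sameCycle_of_swap (f : Equiv.Perm X) {s t : X} (hst : f.SameCycle s t) {x y : X}
    (H : (swap s t * f).SameCycle x y) : f.SameCycle x y := by
  refine sameCycle_induct (R := f.SameCycle) (fun x => Equiv.Perm.SameCycle.refl _ _) ?_ H
  intro x y hxy
  have hfy : f.SameCycle x (f y) := Equiv.Perm.sameCycle_apply_right.2 hxy
  rw [Equiv.Perm.mul_apply]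
  by_cases h1 : f y = s
  · rw [h1, swap_apply_left]; rw [h1] at hfy; exact hfy.trans hst
  by_cases h2 : f y = t
  · rw [h2, swap_apply_right]; rw [h2] at hfy; exact hfy.trans hst.symm
  rwa [swap_apply_of_ne_of_ne h1 h2]

theorem sameCycle_join (h : Equiv.Perm X) {s t : X} (hst : ¬ h.SameCycle s t) (x y : X) :
    (swap s t * h).SameCycle x y ↔ h.SameCycle x y ∨
      ((h.SameCycle s x ∨ h.SameCycle t x) ∧ (h.SameCycle s y ∨ h.SameCycle t y)) := by
  have hne : s ≠ t := by rintro rfl; exact hst (Equiv.Perm.SameCycle.refl _ _)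
  have hg : (swap s t * h).SameCycle s t := (sameCycle_swap h hne).2 hst
  have hback : ∀ {x y}, h.SameCycle x y → (swap s t * h).SameCycle x y := by
    intro x y H
    apply sameCycle_of_swap _ hg
    rwa [← mul_assoc, swap_mul_self, one_mul]
  constructor
  · intro H
    refine sameCycle_induct (R := fun x y => h.SameCycle x y ∨
      ((h.SameCycle s x ∨ h.SameCycle t x) ∧ (h.SameCycle s y ∨ h.SameCycle t y)))
      (fun x => Or.inl (Equiv.Perm.SameCycle.refl _ _)) ?_ H
    intro x y hxy
    rw [Equiv.Perm.mul_apply]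
    have hxy' : h.SameCycle x (h y) ∨ ((h.SameCycle s x ∨ h.SameCycle t x) ∧
        (h.SameCycle s (h y) ∨ h.SameCycle t (h y))) := by
      simpa only [Equiv.Perm.sameCycle_apply_right] using hxy
    by_cases h1 : h y = s
    · rw [h1, swap_apply_left]; rw [h1] at hxy'
      right
      refine ⟨?_, Or.inr (Equiv.Perm.SameCycle.refl _ _)⟩
      rcases hxy' with H | H
      · exact Or.inl H.symm
      · exact H.1
    by_cases h2 : h y = t
    · rw [h2, swap_apply_right]; rw [h2] at hxy'
      right
      refine ⟨?_, Or.inl (Equiv.Perm.SameCycle.refl _ _)⟩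
      rcases hxy' with H | H
      · exact Or.inr H.symm
      · exact H.1
    rwa [swap_apply_of_ne_of_ne h1 h2]
  · rintro (H | ⟨H1, H2⟩)
    · exact hback H
    · have key : ∀ z, (h.SameCycle s z ∨ h.SameCycle t z) → (swap s t * h).SameCycle s z := by
        rintro z (H | H)
        · exact hback H
        · exact hg.trans (hback H)
      exact (key x H1).symm.trans (key y H2)

theorem disjoint_cyc {h : Equiv.Perm X} {s t : X} (hst : ¬ h.SameCycle s t) :
    Disjoint (cyc h s) (cyc h t) := by
  rw [Finset.disjoint_left]
  intro x h1 h2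
  rw [mem_cyc] at h1 h2
  exact hst (h1.trans h2.symm)

theorem card_pts_split (f : Equiv.Perm X) (j : ℕ) {A B : Finset X} (hAB : Disjoint A B) :
    (pts f j).card = (∑ x ∈ (A ∪ B)ᶜ, if (cyc f x).card = j then 1 else 0)
      + ((∑ x ∈ A, if (cyc f x).card = j then 1 else 0)
      + ∑ x ∈ B, if (cyc f x).card = j then 1 else 0) := by
  rw [pts, Finset.card_filter, ← Finset.sum_union hAB, Finset.sum_compl_add_sum]

theorem ctf_join (h : Equiv.Perm X) {s t : X} (hst : ¬ h.SameCycle s t) :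
    cycleTypeFull (swap s t * h) + {(cyc h s).card} + {(cyc h t).card}
      = cycleTypeFull h + {(cyc h s).card + (cyc h t).card} := by
  set g := swap s t * h with hg
  set A := cyc h s with hA
  set B := cyc h t with hB
  have hAB : Disjoint A B := disjoint_cyc hst
  have hApos : 0 < A.card := cyc_card_pos _ _
  have hBpos : 0 < B.card := cyc_card_pos _ _
  have hgC : ∀ x ∈ A ∪ B, cyc g x = A ∪ B := by
    intro x hx
    ext y
    rw [Finset.mem_union, hA, hB, mem_cyc, mem_cyc] at hx
    rw [Finset.mem_union, mem_cyc, hg, sameCycle_join h hst, hA, hB, mem_cyc, mem_cyc]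
    constructor
    · rintro (H | H)
      · exact hx.imp (fun h' => h'.trans H) (fun h' => h'.trans H)
      · exact H.2
    · intro H; exact Or.inr ⟨hx, H⟩
  have hgD : ∀ x ∈ (A ∪ B)ᶜ, cyc g x = cyc h x := by
    intro x hx
    ext y
    rw [Finset.mem_compl, Finset.mem_union, hA, hB, mem_cyc, mem_cyc] at hx
    rw [mem_cyc, mem_cyc, hg, sameCycle_join h hst]
    tauto
  ext j
  rcases Nat.eq_zero_or_pos j with rfl | hj
  · have e1 := Multiset.count_eq_zero.2 (zero_notMem_ctf g)
    have e2 := Multiset.count_eq_zero.2 (zero_notMem_ctf h)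
    simp only [Multiset.count_add, Multiset.count_singleton, e1, e2]
    rw [if_neg (by omega), if_neg (by omega), if_neg (by omega)]
  · have e1 := card_pts_split g j hAB
    have e2 := card_pts_split h j hAB
    rw [card_pts] at e1 e2
    rw [Finset.sum_congr rfl (fun x hx => by rw [hgD x hx]),
      Finset.sum_congr (s₁ := A) rfl
        (fun x hx => by rw [hgC x (Finset.mem_union_left _ hx), Finset.card_union_of_disjoint hAB]),
      Finset.sum_congr (s₁ := B) rfl
        (fun x hx => by rw [hgC x (Finset.mem_union_right _ hx), Finset.card_union_of_disjoint hAB]),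
      Finset.sum_const, Finset.sum_const] at e1
    rw [Finset.sum_congr (s₁ := A) rfl
        (fun x hx => by rw [← cyc_eq (mem_cyc.1 hx)]),
      Finset.sum_congr (s₁ := B) rfl
        (fun x hx => by rw [← cyc_eq (mem_cyc.1 hx)]),
      Finset.sum_const, Finset.sum_const] at e2
    rw [← hA, ← hB] at e2
    simp only [smul_eq_mul] at e1 e2
    simp only [Multiset.count_add, Multiset.count_singleton]
    apply Nat.eq_of_mul_eq_mul_left hj
    rw [mul_add, mul_add, mul_add, e1, e2]
    have t1 : ∀ a : ℕ, j * (if j = a then 1 else 0) = a * (if a = j then 1 else 0) := by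
      intro a
      by_cases ha : a = j
      · simp [ha]
      · simp [ha, Ne.symm ha]
    rw [t1, t1, t1]
    ring

theorem target_iff (h : Equiv.Perm X) {i : ℕ} (hi : 0 < i) (hm : 2 ≤ (cycleTypeFull h).count i)
    {s t : X} (hst : s ≠ t) :
    cycleTypeFull (swap s t * h) = ((cycleTypeFull h).erase i).erase i + {2 * i} ↔
      ¬ h.SameCycle s t ∧ (cyc h s).card = i ∧ (cyc h t).card = i := by
  have hrep : ((cycleTypeFull h).erase i).erase i + {i} + {i} = cycleTypeFull h := by
    have h1 : i ∈ cycleTypeFull h := Multiset.count_pos.1 (by omega)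
    have h2 : i ∈ (cycleTypeFull h).erase i := by
      apply Multiset.count_pos.1; rw [Multiset.count_erase_self]; omega
    rw [add_comm _ ({i} : Multiset ℕ), Multiset.singleton_add,
      add_comm _ ({i} : Multiset ℕ), Multiset.singleton_add,
      Multiset.cons_erase h2, Multiset.cons_erase h1]
  generalize hE : ((cycleTypeFull h).erase i).erase i = E at *
  by_cases hsc : h.SameCycle s t
  · simp only [hsc, not_true_eq_false, false_and, iff_false]
    intro H
    have hns : ¬ (swap s t * h).SameCycle s t := by rw [sameCycle_swap h hst]; simpa using hsc
    have := congrArg Multiset.card (ctf_join (swap s t * h) hns)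
    rw [← mul_assoc, swap_mul_self, one_mul, H, ← hrep] at this
    simp at this
    omega
  · have J := ctf_join h hsc
    have ha := cyc_card_pos h s
    have hb := cyc_card_pos h t
    generalize (cyc h s).card = a at *
    generalize (cyc h t).card = b at *
    simp only [hsc, not_false_eq_true, true_and]
    constructor
    · intro H
      rw [H, ← hrep] at J
      have J' : ({2 * i} + {a} + {b} : Multiset ℕ) = {i} + {i} + {a + b} := by
        apply add_left_cancel (a := E)
        rw [← add_assoc, ← add_assoc, J]
        simp only [add_assoc]
      have c1 := congrArg (Multiset.count i) J'
      simp only [Multiset.count_add, Multiset.count_singleton] at c1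
      split_ifs at c1 <;> omega
    · rintro ⟨rfl, rfl⟩
      rw [← hrep] at J
      apply add_right_cancel (b := ({b} + {b} : Multiset ℕ))
      rw [← add_assoc, J, two_mul]
      ac_rfl

/-- The ordered pairs. -/
noncomputable def prs (h : Equiv.Perm X) (i : ℕ) : Finset (Σ _ : X, X) :=
  (pts h i).sigma fun s => pts h i \ cyc h s

theorem mem_prs {h : Equiv.Perm X} {i : ℕ} {s t : X} :
    (⟨s, t⟩ : Σ _ : X, X) ∈ prs h i ↔
      ¬ h.SameCycle s t ∧ (cyc h s).card = i ∧ (cyc h t).card = i := by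
  simp only [prs, Finset.mem_sigma, Finset.mem_sdiff, mem_pts, mem_cyc]
  tauto

theorem card_prs (h : Equiv.Perm X) (i : ℕ) :
    (prs h i).card
      = i ^ 2 * (cycleTypeFull h).count i * ((cycleTypeFull h).count i - 1) := by
  rw [prs, Finset.card_sigma]
  rw [Finset.sum_congr rfl (g := fun _ => i * (cycleTypeFull h).count i - i)]
  · rw [Finset.sum_const, card_pts, smul_eq_mul, ← Nat.mul_sub_one]; ring
  · intro s hs
    have hsub : cyc h s ⊆ pts h i := by
      intro y hy
      rw [mem_pts, ← cyc_eq (mem_cyc.1 hy)]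
      exact mem_pts.1 hs
    rw [Finset.card_sdiff_of_subset hsub, card_pts, mem_pts.1 hs]

theorem swap_eq_swap {s t a b : X} (hst : s ≠ t) (H : swap a b = swap s t) :
    (a = s ∧ b = t) ∨ (a = t ∧ b = s) := by
  have h1 : swap a b s = t := by rw [H, swap_apply_left]
  rw [swap_apply_def] at h1
  split_ifs at h1 with h2 h3
  · exact Or.inl ⟨h2.symm, h1⟩
  · exact Or.inr ⟨h1, h3.symm⟩
  · exact absurd h1 hst

end JoinCount

open JoinCount in
/-- for a permutation `h` with cycle type `μ` (including fixed points) and a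
positive integer `i`, the number of transpositions `τ` such that the cycle type of `τ ∘ h`
is `μ` with two parts `i` removed and one part `2i` added is exactly
`i² · m_i(μ) · (m_i(μ) − 1) / 2`. -/
theorem count_join_transpositions_eq
    {X : Type*} [Fintype X] [DecidableEq X] (h : Equiv.Perm X) (i : ℕ) (hi : 0 < i) :
    Set.ncard {τ : Equiv.Perm X | τ.IsSwap ∧
        cycleTypeFull (τ * h)
          = ((cycleTypeFull h).erase i).erase i + {2 * i}}
      = i ^ 2 * (cycleTypeFull h).count i * ((cycleTypeFull h).count i - 1) / 2 := by
  classical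
  rcases Nat.lt_or_ge ((cycleTypeFull h).count i) 2 with hm | hm
  · have hr : i ^ 2 * (cycleTypeFull h).count i * ((cycleTypeFull h).count i - 1) / 2 = 0 := by
      interval_cases (cycleTypeFull h).count i <;> simp
    rw [hr, Set.ncard_eq_zero, Set.eq_empty_iff_forall_notMem]
    rintro τ ⟨-, H⟩
    have hs := congrArg Multiset.sum H
    have h2 : i ∉ (cycleTypeFull h).erase i := by
      rw [← Multiset.count_eq_zero, Multiset.count_erase_self]; omega
    rw [ctf_sum, Multiset.erase_of_notMem h2, Multiset.sum_add, Multiset.sum_singleton,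
      ← ctf_sum h] at hs
    by_cases h1 : i ∈ cycleTypeFull h
    · have := congrArg Multiset.sum (Multiset.cons_erase h1)
      rw [Multiset.sum_cons] at this
      omega
    · rw [Multiset.erase_of_notMem h1] at hs
      omega
  · rw [← card_prs]
    set T : Finset (Equiv.Perm X) := Finset.univ.filter fun τ => τ.IsSwap ∧
        cycleTypeFull (τ * h) = ((cycleTypeFull h).erase i).erase i + {2 * i} with hT
    have hTs : {τ : Equiv.Perm X | τ.IsSwap ∧
        cycleTypeFull (τ * h)
          = ((cycleTypeFull h).erase i).erase i + {2 * i}} = (T : Set (Equiv.Perm X)) := by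
      ext τ; simp [hT]
    rw [hTs, Set.ncard_coe_finset]
    have hmaps : ∀ p ∈ prs h i, swap p.1 p.2 ∈ T := by
      rintro ⟨s, t⟩ hp
      have hp' := mem_prs.1 hp
      have hne : s ≠ t := by rintro rfl; exact hp'.1 (Equiv.Perm.SameCycle.refl _ _)
      rw [hT, Finset.mem_filter]
      exact ⟨Finset.mem_univ _, ⟨s, t, hne, rfl⟩, (target_iff h hi hm hne).2 hp'⟩
    have hcard := Finset.card_eq_sum_card_fiberwise (f := fun p : (Σ _ : X, X) => swap p.1 p.2)
      (s := prs h i) (t := T) hmaps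
    rw [Finset.sum_congr rfl (g := fun _ => 2)] at hcard
    · rw [hcard]; simp
    · intro τ hτ
      rw [hT, Finset.mem_filter] at hτ
      obtain ⟨-, ⟨s, t, hne, rfl⟩, H⟩ := hτ
      have hp := (target_iff h hi hm hne).1 H
      have hfib : ((prs h i).filter fun p => swap p.1 p.2 = swap s t)
          = {(⟨s, t⟩ : Σ _ : X, X), ⟨t, s⟩} := by
        ext ⟨a, b⟩
        rw [Finset.mem_filter, mem_prs, Finset.mem_insert, Finset.mem_singleton]
        constructor
        · rintro ⟨-, H'⟩
          rcases swap_eq_swap hne H' with ⟨rfl, rfl⟩ | ⟨rfl, rfl⟩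
          · exact Or.inl rfl
          · exact Or.inr rfl
        · rintro (H' | H')
          · cases H'; exact ⟨hp, rfl⟩
          · cases H'; exact ⟨⟨fun h' => hp.1 h'.symm, hp.2.2, hp.2.1⟩, swap_comm _ _⟩
      rw [hfib, Finset.card_pair]
      intro H'
      cases H'
      exact hne rfl
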